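/- Fix an integer n ≥ 2 and let ρ : ℝ³ → [0,∞] be a Borel function such that for every a ∈ [-1,1] and every t ∈ [-1,1] one has ∫_{1/n}^{1} ρ(a,λ,t)/(2λ) dλ ≥ 1. Then ∫_{[-1,1] × [1/n,1] × [-1,1]} ρ(a,λ,t)⁴ λ⁻² da dλ dt ≥ 2⁴/3³ = 16/27. (The proof integrates the hypothesis over a,t ∈ [-1,1], applies Hölder's inequality with exponents 4 and 4/3 to ρ/√λ · 1/√λ on the box P_n = [-1,1] × [1/n,1] × [-1,1], and uses ∫_{P_n} λ^{-2/3} da dλ dt ≤ 12.) -/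

import Mathlib

open MeasureTheory ENNReal

/-!
The bound already holds on each fibre `λ ↦ (a, λ, t)` with `a, t ∈ [-1,1]`. Hölder's inequality
with exponents `4` and `4/3`, applied to `(ρ λ^(-1/2)) · λ^(-1/2)`, gives
`2 ≤ ∫ ρ/λ ≤ (∫ ρ⁴ λ⁻²)^(1/4) · (∫ λ^(-2/3))^(3/4)`, and `∫_{1/n}^1 λ^(-2/3) dλ ≤ 3`, so
`16/27 ≤ ∫ ρ⁴ λ⁻² dλ` (`fibre_bound`). Tonelli's theorem then integrates this over the square of
parameters `(a, t)`, whose area is `4 ≥ 1`.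
-/

lemma lintegral_rpow_neg_two_thirds_le (n : ℕ) (hn : 2 ≤ n) :
    ∫⁻ l in Set.Icc ((n : ℝ)⁻¹) 1, ENNReal.ofReal (l ^ (-(2 / 3) : ℝ)) ≤ 3 := by
  have hn0 : (0 : ℝ) < (n : ℝ)⁻¹ := by positivity
  have hn1 : (n : ℝ)⁻¹ ≤ 1 := by
    apply inv_le_one_of_one_le₀
    exact_mod_cast (by omega : 1 ≤ n)
  have hint : IntervalIntegrable (fun l : ℝ => l ^ (-(2 / 3) : ℝ)) volume ((n : ℝ)⁻¹) 1 :=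
    intervalIntegral.intervalIntegrable_rpow' (by norm_num)
  rw [setLIntegral_congr Ioc_ae_eq_Icc.symm,
    ← ofReal_integral_eq_lintegral_ofReal
      ((intervalIntegrable_iff_integrableOn_Ioc_of_le hn1).1 hint),
    ← intervalIntegral.integral_of_le hn1, integral_rpow (Or.inl (by norm_num))]
  · rw [show (3 : ℝ≥0∞) = ENNReal.ofReal 3 by norm_num]
    apply ENNReal.ofReal_le_ofReal
    have := Real.rpow_nonneg hn0.le (-(2 / 3) + 1)
    rw [Real.one_rpow, div_le_iff₀ (by norm_num)]
    linarith
  · filter_upwards [ae_restrict_mem measurableSet_Ioc] with l hl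
    exact Real.rpow_nonneg (hn0.trans hl.1).le _

/-- The one-dimensional inequality on a fibre, by Hölder's inequality. -/
lemma fibre_bound (n : ℕ) (hn : 2 ≤ n) (r : ℝ → ℝ≥0∞) (hr : Measurable r)
    (adm : 1 ≤ ∫⁻ l in Set.Icc ((n : ℝ)⁻¹) 1, r l * ENNReal.ofReal (1 / (2 * l))) :
    (16 / 27 : ℝ≥0∞) ≤
      ∫⁻ l in Set.Icc ((n : ℝ)⁻¹) 1, r l ^ 4 * ENNReal.ofReal (l⁻¹ ^ 2) := by
  have hn0 : (0 : ℝ) < (n : ℝ)⁻¹ := by positivity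
  set μ := (volume : Measure ℝ).restrict (Set.Icc ((n : ℝ)⁻¹) 1) with hμ
  have hpos : ∀ᵐ l ∂μ, 0 < l := by
    filter_upwards [ae_restrict_mem measurableSet_Icc] with l hl
    exact hn0.trans_le hl.1
  let g : ℝ → ℝ≥0∞ := fun l => ENNReal.ofReal (l ^ (-(1 / 2) : ℝ))
  have hg : Measurable g := by fun_prop
  have holder := ENNReal.lintegral_mul_le_Lp_mul_Lq μ
    (show Real.HolderConjugate 4 (4 / 3) by
      rw [Real.holderConjugate_iff]; norm_num) (hr.mul hg).aemeasurable hg.aemeasurable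
  have e1 : ∫⁻ l, ((r * g) * g) l ∂μ
      = 2 * ∫⁻ l, r l * ENNReal.ofReal (1 / (2 * l)) ∂μ := by
    rw [← lintegral_const_mul' _ _ (by norm_num)]
    apply lintegral_congr_ae
    filter_upwards [hpos] with l hl
    have : g l * g l = 2 * ENNReal.ofReal (1 / (2 * l)) := by
      rw [show (2 : ℝ≥0∞) = ENNReal.ofReal 2 by norm_num,
        ← ENNReal.ofReal_mul (Real.rpow_nonneg hl.le _), ← Real.rpow_add hl,
        ← ENNReal.ofReal_mul (by norm_num)]
      congr 1
      norm_num [Real.rpow_neg_one]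
      field_simp
    simp only [Pi.mul_apply]
    rw [mul_assoc, this]
    ring
  have e2 : ∫⁻ l, (r * g) l ^ (4 : ℝ) ∂μ
      = ∫⁻ l, r l ^ 4 * ENNReal.ofReal (l⁻¹ ^ 2) ∂μ := by
    apply lintegral_congr_ae
    filter_upwards [hpos] with l hl
    rw [show (4 : ℝ) = ((4 : ℕ) : ℝ) by norm_num, ENNReal.rpow_natCast, Pi.mul_apply, mul_pow]
    congr 1
    rw [← ENNReal.ofReal_pow (Real.rpow_nonneg hl.le _), ← Real.rpow_natCast,
      ← Real.rpow_mul hl.le, ← Real.rpow_neg_one, ← Real.rpow_natCast, ← Real.rpow_mul hl.le]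
    norm_num
  have e3 : ∫⁻ l, g l ^ (4 / 3 : ℝ) ∂μ ≤ 3 := by
    refine le_of_eq_of_le ?_ (lintegral_rpow_neg_two_thirds_le n hn)
    apply lintegral_congr_ae
    filter_upwards [hpos] with l hl
    rw [ENNReal.ofReal_rpow_of_nonneg (Real.rpow_nonneg hl.le _) (by norm_num),
      ← Real.rpow_mul hl.le]
    norm_num
  rw [e1, e2] at holder
  set I := ∫⁻ l, r l ^ 4 * ENNReal.ofReal (l⁻¹ ^ 2) ∂μ
  have h2 : (2 : ℝ≥0∞) ≤ I ^ (1 / 4 : ℝ) * 3 ^ (3 / 4 : ℝ) := by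
    calc (2 : ℝ≥0∞) = 2 * 1 := by norm_num
      _ ≤ _ := by gcongr
      _ ≤ _ := holder
      _ ≤ I ^ (1 / 4 : ℝ) * 3 ^ (1 / (4 / 3) : ℝ) := by gcongr
      _ = _ := by norm_num
  have h16 := pow_le_pow_left' h2 4
  rw [mul_pow, ← ENNReal.rpow_natCast (I ^ _), ← ENNReal.rpow_natCast (3 ^ _),
    ← ENNReal.rpow_mul, ← ENNReal.rpow_mul,
    show (1 / 4 : ℝ) * (4 : ℕ) = 1 by norm_num,
    show (3 / 4 : ℝ) * (4 : ℕ) = (3 : ℕ) by norm_num, ENNReal.rpow_one,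
    ENNReal.rpow_natCast] at h16
  apply ENNReal.div_le_of_le_mul
  norm_num at h16
  exact h16

/-- If `ρ : ℝ³ → [0,∞]` satisfies `∫_{1/n}^{1} ρ(a,λ,t)/(2λ) dλ ≥ 1` for all
`a, t ∈ [-1,1]`, then `∫_{[-1,1] × [1/n,1] × [-1,1]} ρ⁴ λ⁻² da dλ dt ≥ 2⁴/3³ = 16/27`. -/
theorem stmt10 (n : ℕ) (hn : 2 ≤ n) (ρ : ℝ × ℝ × ℝ → ℝ≥0∞) (hρ : Measurable ρ)
    (adm : ∀ a ∈ Set.Icc (-1 : ℝ) 1, ∀ t ∈ Set.Icc (-1 : ℝ) 1,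
      1 ≤ ∫⁻ l in Set.Icc ((n : ℝ)⁻¹) 1, ρ (a, l, t) * ENNReal.ofReal (1 / (2 * l))) :
    (16 / 27 : ℝ≥0∞) ≤
      ∫⁻ p in {p : ℝ × ℝ × ℝ |
          p.1 ∈ Set.Icc (-1 : ℝ) 1 ∧ p.2.1 ∈ Set.Icc ((n : ℝ)⁻¹) 1 ∧
          p.2.2 ∈ Set.Icc (-1 : ℝ) 1},
        (ρ p) ^ 4 * ENNReal.ofReal (p.2.1⁻¹ ^ 2) := by
  have hbox : {p : ℝ × ℝ × ℝ |
          p.1 ∈ Set.Icc (-1 : ℝ) 1 ∧ p.2.1 ∈ Set.Icc ((n : ℝ)⁻¹) 1 ∧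
          p.2.2 ∈ Set.Icc (-1 : ℝ) 1}
      = Set.Icc (-1 : ℝ) 1 ×ˢ (Set.Icc ((n : ℝ)⁻¹) 1 ×ˢ Set.Icc (-1 : ℝ) 1) := rfl
  have hF : Measurable fun p : ℝ × ℝ × ℝ => (ρ p) ^ 4 * ENNReal.ofReal (p.2.1⁻¹ ^ 2) := by
    fun_prop
  -- A constant lower bound on `[-1,1]`, an interval of length `2 ≥ 1`, passes to the integral.
  have hconst : ∀ (f : ℝ → ℝ≥0∞), (∀ x ∈ Set.Icc (-1 : ℝ) 1, (16 / 27 : ℝ≥0∞) ≤ f x) →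
      (16 / 27 : ℝ≥0∞) ≤ ∫⁻ x in Set.Icc (-1 : ℝ) 1, f x := by
    intro f hf
    calc (16 / 27 : ℝ≥0∞) ≤ 16 / 27 * volume (Set.Icc (-1 : ℝ) 1) := by
          rw [Real.volume_Icc]
          refine le_mul_of_one_le_right' ?_
          rw [ENNReal.one_le_ofReal]
          norm_num
      _ = ∫⁻ _ in Set.Icc (-1 : ℝ) 1, (16 / 27 : ℝ≥0∞) := (setLIntegral_const _ _).symm
      _ ≤ _ := setLIntegral_mono' measurableSet_Icc hf
  rw [hbox, Measure.volume_eq_prod, Measure.volume_eq_prod, ← Measure.prod_restrict,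
    ← Measure.prod_restrict, lintegral_prod _ hF.aemeasurable]
  refine hconst _ fun a ha => ?_
  rw [lintegral_prod_symm _ (by fun_prop)]
  refine hconst _ fun t ht => ?_
  exact fibre_bound n hn (fun l => ρ (a, l, t)) (by fun_prop) (adm a ha t ht)
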